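/- Let (Ω, μ) be a probability space, n > 0 a blocklength, θ > 0 a delay-QoS exponent, ϑ > 0 an error-rate-QoS exponent, and R : Ω → ℝ a nonnegative measurable coding-rate function. Then the ε-effective capacity satisfies the two-sided bound 0 ≤ EC(θ,ϑ) ≤ ϑ/θ, where EC(θ,ϑ) = −(1/(nθ)) log ∫_Ω ( e^{−nϑ} + (1 − e^{−nϑ}) e^{−nθR(ω)} ) dμ(ω). In particular, with nonzero decoding error probability the effective service rate is capped by the ratio of the reliability exponent to the delay exponent. -/

import Mathlib

open MeasureTheory

/-!
Since `μ` is a probability measure, the integral is the convex combination `ε + (1 - ε) M` of `1`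
and `M = E[exp (-nθR)]`, where `ε = exp (-nϑ)`. As `0 ≤ M`, it is at least `ε`, whose logarithm is
`-nϑ`; as `M ≤ 1`, it is at most `1`. Dividing the logarithm by `-nθ` turns these bounds into
`ϑ / θ` and `0`.
-/

open ProbabilityTheory

section Mgf

variable {Ω : Type*} [MeasurableSpace Ω] {μ : Measure Ω} {X : Ω → ℝ} {t : ℝ}

lemma integrable_exp_mul_of_nonpos_of_ae_nonneg [IsFiniteMeasure μ] (hX : AEMeasurable X μ)
    (hX_nonneg : 0 ≤ᵐ[μ] X) (ht : t ≤ 0) : Integrable (fun ω ↦ Real.exp (t * X ω)) μ := by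
  have hX_neg : ∀ᵐ ω ∂μ, (-X) ω ≤ 0 := hX_nonneg.mono fun _ ↦ neg_nonpos.2
  simpa using integrable_exp_mul_of_le (-t) 0 (neg_nonneg.2 ht) hX.neg hX_neg

lemma mgf_le_one_of_nonpos_of_ae_nonneg [IsProbabilityMeasure μ] (hX_nonneg : 0 ≤ᵐ[μ] X)
    (ht : t ≤ 0) : mgf X μ t ≤ 1 := by
  simpa using mgf_anti_of_nonpos hX_nonneg ht (by simp)

lemma integral_const_add_const_mul_exp_mul [IsProbabilityMeasure μ] (a b : ℝ)
    (hX_int : Integrable (fun ω ↦ Real.exp (t * X ω)) μ) :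
    ∫ ω, (a + b * Real.exp (t * X ω)) ∂μ = a + b * mgf X μ t := by
  rw [integral_add (integrable_const a) (hX_int.const_mul b), integral_const_mul, mgf]
  simp

end Mgf

/-- The `ε`-effective capacity of the coding rate `R` at blocklength `n`, delay-QoS exponent `θ` and
error-rate-QoS exponent `ϑ`, for the decoding error probability `ε = exp (-(n * ϑ))`. When
`exp (-(n * θ * R ω))` is not integrable the Bochner integral may be the junk value `0`. -/
noncomputable def epsEffectiveCapacity {Ω : Type*} [MeasurableSpace Ω] (μ : Measure Ω)
    (n θ ϑ : ℝ) (R : Ω → ℝ) : ℝ :=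
  -(1 / (n * θ)) * Real.log (∫ ω, (Real.exp (-(n * ϑ)) +
    (1 - Real.exp (-(n * ϑ))) * Real.exp (-(n * θ * R ω))) ∂μ)

section EpsEffectiveCapacity

variable {Ω : Type*} [MeasurableSpace Ω] {μ : Measure Ω} [IsProbabilityMeasure μ]
  {n θ ϑ : ℝ} {R : Ω → ℝ}

lemma epsEffectiveCapacity_eq_neg_log_div
    (hR_int : Integrable (fun ω ↦ Real.exp (-(n * θ) * R ω)) μ) :
    epsEffectiveCapacity μ n θ ϑ R =
      -Real.log (Real.exp (-(n * ϑ)) + (1 - Real.exp (-(n * ϑ))) * mgf R μ (-(n * θ))) /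
        (n * θ) := by
  rw [← integral_const_add_const_mul_exp_mul _ _ hR_int]
  simp only [epsEffectiveCapacity, neg_mul]
  ring

lemma epsEffectiveCapacity_nonneg (hn : 0 < n) (hθ : 0 < θ) (hϑ : 0 ≤ ϑ)
    (hR_int : Integrable (fun ω ↦ Real.exp (-(n * θ) * R ω)) μ) (hR_nonneg : 0 ≤ᵐ[μ] R) :
    0 ≤ epsEffectiveCapacity μ n θ ϑ R := by
  have hnθ : 0 < n * θ := mul_pos hn hθ
  have herr : 0 ≤ 1 - Real.exp (-(n * ϑ)) :=
    sub_nonneg.2 (Real.exp_le_one_iff.2 (neg_nonpos.2 (mul_nonneg hn.le hϑ)))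
  have hmgf : mgf R μ (-(n * θ)) ≤ 1 :=
    mgf_le_one_of_nonpos_of_ae_nonneg hR_nonneg (neg_nonpos.2 hnθ.le)
  rw [epsEffectiveCapacity_eq_neg_log_div hR_int]
  refine div_nonneg (neg_nonneg.2 (Real.log_nonpos ?_ ?_)) hnθ.le
  · exact add_nonneg (Real.exp_nonneg _) (mul_nonneg herr mgf_nonneg)
  · linarith [mul_le_of_le_one_right herr hmgf]

lemma epsEffectiveCapacity_le_div (hn : 0 < n) (hθ : 0 < θ) (hϑ : 0 ≤ ϑ)
    (hR_int : Integrable (fun ω ↦ Real.exp (-(n * θ) * R ω)) μ) :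
    epsEffectiveCapacity μ n θ ϑ R ≤ ϑ / θ := by
  have herr : 0 ≤ 1 - Real.exp (-(n * ϑ)) :=
    sub_nonneg.2 (Real.exp_le_one_iff.2 (neg_nonpos.2 (mul_nonneg hn.le hϑ)))
  have hexp_le : Real.exp (-(n * ϑ)) ≤
      Real.exp (-(n * ϑ)) + (1 - Real.exp (-(n * ϑ))) * mgf R μ (-(n * θ)) :=
    le_add_of_nonneg_right (mul_nonneg herr mgf_nonneg)
  have hlog := (Real.le_log_iff_exp_le ((Real.exp_pos _).trans_le hexp_le)).2 hexp_le
  calc epsEffectiveCapacity μ n θ ϑ R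
      = -Real.log (Real.exp (-(n * ϑ)) + (1 - Real.exp (-(n * ϑ))) * mgf R μ (-(n * θ))) /
          (n * θ) := epsEffectiveCapacity_eq_neg_log_div hR_int
    _ ≤ n * ϑ / (n * θ) := by gcongr; exact neg_le.1 hlog
    _ = ϑ / θ := mul_div_mul_left ϑ θ hn.ne'

end EpsEffectiveCapacity

/-- Two-sided bound on the ε-effective capacity (Definition 3):
`0 ≤ EC(θ,ϑ) ≤ ϑ/θ`, where
`EC(θ,ϑ) = −(1/(nθ)) log ∫ (e^{−nϑ} + (1 − e^{−nϑ}) e^{−nθR(ω)}) dμ`. -/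
theorem eps_effective_capacity_bounds
    {Ω : Type*} [MeasurableSpace Ω] (μ : Measure Ω) [IsProbabilityMeasure μ]
    (n θ ϑ : ℝ) (hn : 0 < n) (hθ : 0 < θ) (hϑ : 0 < ϑ)
    (R : Ω → ℝ) (hRmeas : Measurable R) (hRnonneg : ∀ ω, 0 ≤ R ω) :
    0 ≤ -(1 / (n * θ)) *
        Real.log (∫ ω, (Real.exp (-(n * ϑ)) +
          (1 - Real.exp (-(n * ϑ))) * Real.exp (-(n * θ * R ω))) ∂μ) ∧
    -(1 / (n * θ)) *
        Real.log (∫ ω, (Real.exp (-(n * ϑ)) +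
          (1 - Real.exp (-(n * ϑ))) * Real.exp (-(n * θ * R ω))) ∂μ)
      ≤ ϑ / θ := by
  have hR_ae : 0 ≤ᵐ[μ] R := .of_forall hRnonneg
  have hR_int : Integrable (fun ω ↦ Real.exp (-(n * θ) * R ω)) μ :=
    integrable_exp_mul_of_nonpos_of_ae_nonneg hRmeas.aemeasurable hR_ae
      (neg_nonpos.2 (mul_pos hn hθ).le)
  exact ⟨epsEffectiveCapacity_nonneg hn hθ hϑ.le hR_int hR_ae,
    epsEffectiveCapacity_le_div hn hθ hϑ.le hR_int⟩
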